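/- Let f ∈ L¹[0,1] and γ > 0, and let the sampling S_k be either integral sampling, or point sampling at midpoints with f continuous. Then the fully discrete L¹-Potts functionals P_γ^k Γ-converge to P_γ in L¹[0,1]; every sequence (u_k), where u_k is a minimizer of P_γ^k, has at least one accumulation point in L¹[0,1]; and every such accumulation point u satisfies P_γ(u) = inf_{v ∈ L¹[0,1]} P_γ(v). -/

import Mathlib

open MeasureTheory Filter Set
open scoped ENNReal Classical

noncomputable section

/-- The Lebesgue measure restricted to `[0,1]`. -/
def mu01 : Measure ℝ := volume.restrict (Set.Icc (0:ℝ) 1)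

/-- The step function determined by partition points `x` and values `a`. -/
def stepF {m : ℕ} (x : Fin (m + 1) → ℝ) (a : Fin m → ℝ) : ℝ → ℝ := fun t =>
  ∑ l : Fin m, Set.indicator (Set.Ioo (x l.castSucc) (x l.succ)) (fun _ => a l) t

/-- `u` is a.e. on `[0,1]` represented by the step function with partition `x` and values `a`. -/
def IsPCRep (u : ℝ → ℝ) {m : ℕ} (x : Fin (m + 1) → ℝ) (a : Fin m → ℝ) : Prop :=
  StrictMono x ∧ x 0 = 0 ∧ x (Fin.last m) = 1 ∧ ∀ᵐ t ∂mu01, u t = stepF x a t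

/-- `u` is piecewise constant on `[0,1]` (up to a.e. equality). -/
def IsPC (u : ℝ → ℝ) : Prop :=
  ∃ (m : ℕ) (x : Fin (m + 1) → ℝ) (a : Fin m → ℝ), IsPCRep u x a

/-- The number of jumps `J(u)`: the minimal number of interior partition points over all
piecewise constant representations of `u`. -/
def jumps (u : ℝ → ℝ) : ℕ :=
  sInf {jj : ℕ | ∃ (x : Fin (jj + 2) → ℝ) (a : Fin (jj + 1) → ℝ), IsPCRep u x a}

/-- `u` is piecewise constant with all jump locations inside `S`. -/
def IsPCIn (u : ℝ → ℝ) (S : Set ℝ) : Prop :=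
  ∃ (m : ℕ) (x : Fin (m + 1) → ℝ) (a : Fin m → ℝ), IsPCRep u x a ∧
    ∀ i : Fin (m + 1), i ≠ 0 → i ≠ Fin.last m → x i ∈ S

/-- The `L¹[0,1]` distance of two functions. -/
def L1dist (u v : ℝ → ℝ) : ℝ := ∫ t, |u t - v t| ∂mu01

/-- The continuous `L¹`-Potts functional `P_γ` with data `f`. -/
def Potts (γ : ℝ) (f u : ℝ → ℝ) : ℝ≥0∞ :=
  if IsPC u then ENNReal.ofReal (γ * (jumps u : ℝ) + L1dist u f) else ⊤

/-- The (semi-)discrete `L¹`-Potts functional with data `f`, restricted to piecewise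
constant functions whose jumps lie in `S`. -/
def PottsIn (γ : ℝ) (f : ℝ → ℝ) (S : Set ℝ) (u : ℝ → ℝ) : ℝ≥0∞ :=
  if IsPCIn u S then ENNReal.ofReal (γ * (jumps u : ℝ) + L1dist u f) else ⊤

/-- `fk` agrees, on each interval between consecutive discretization points of
`{0,1} ∪ X`, with the average of `f` over that interval (integral sampling). -/
def IntegralSampled (X : Set ℝ) (f fk : ℝ → ℝ) : Prop :=
  ∀ a b : ℝ, a ∈ insert (0:ℝ) (insert 1 X) → b ∈ insert (0:ℝ) (insert 1 X) → a < b →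
    Set.Ioo a b ∩ X = ∅ →
    ∀ t ∈ Set.Ioo a b, fk t = (b - a)⁻¹ * ∫ s in Set.Ioo a b, f s

/-- `fk` agrees, on each interval between consecutive discretization points of
`{0,1} ∪ X`, with the value of `f` at the midpoint of that interval (point sampling). -/
def PointSampled (X : Set ℝ) (f fk : ℝ → ℝ) : Prop :=
  ∀ a b : ℝ, a ∈ insert (0:ℝ) (insert 1 X) → b ∈ insert (0:ℝ) (insert 1 X) → a < b →
    Set.Ioo a b ∩ X = ∅ →
    ∀ t ∈ Set.Ioo a b, fk t = f ((a + b) / 2)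

/-- Away from at most `N` points of `S ∪ {0, 1}`, the function `u` is a.e. locally constant. -/
def JumpsWithin (N : ℕ) (S : Set ℝ) (u : ℝ → ℝ) : Prop :=
  ∃ p : Fin N → ℝ, (∀ i, p i ∈ Icc (0:ℝ) 1) ∧ (∀ i, p i ∈ insert (0:ℝ) (insert 1 S)) ∧
    ∃ G : Set ℝ, (∀ᵐ t ∂mu01, t ∈ G) ∧
      ∀ s ∈ G, ∀ t ∈ G, s < t → (∀ i, p i ∉ Icc s t) → u s = u t

instance : IsFiniteMeasure mu01 := by
  unfold mu01; infer_instance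

lemma ae_mu01_mem_Ioo : ∀ᵐ t ∂mu01, t ∈ Ioo (0:ℝ) 1 := by
  unfold mu01
  rw [← Measure.restrict_congr_set (Ioo_ae_eq_Icc (μ := volume) (a := (0:ℝ)) (b := 1))]
  exact ae_restrict_mem measurableSet_Ioo

lemma ae_mu01_notMem_finite {F : Set ℝ} (hF : F.Finite) : ∀ᵐ t ∂mu01, t ∉ F := by
  have h : mu01 F = 0 := by
    unfold mu01
    exact le_antisymm (le_trans (Measure.restrict_apply_le _ _) (hF.measure_zero _).le) bot_le
  exact measure_eq_zero_iff_ae_notMem.1 h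

lemma stepF_apply_of_mem_Ioo {m : ℕ} {x : Fin (m + 1) → ℝ} (hx : StrictMono x) (a : Fin m → ℝ)
    {t : ℝ} {l : Fin m} (ht : t ∈ Ioo (x l.castSucc) (x l.succ)) : stepF x a t = a l := by
  unfold stepF
  rw [Finset.sum_eq_single l]
  · simp [ht]
  · intro i _ hil
    rw [indicator_of_notMem]
    rintro ⟨h1, h2⟩
    rcases lt_or_gt_of_ne hil with h | h
    · have : x i.succ ≤ x l.castSucc := hx.monotone (by
        rw [Fin.le_def]; simp; omega)
      linarith [ht.1]
    · have : x l.succ ≤ x i.castSucc := hx.monotone (by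
        rw [Fin.le_def]; simp; omega)
      linarith [ht.2]
  · simp

lemma exists_mem_Ioo_of_notMem_range {m : ℕ} {x : Fin (m + 1) → ℝ} {t : ℝ}
    (h0 : x 0 < t) (h1 : t < x (Fin.last m)) (ht : t ∉ range x) :
    ∃ l : Fin m, t ∈ Ioo (x l.castSucc) (x l.succ) := by
  by_contra hcon
  push Not at hcon
  have key : ∀ i : Fin (m + 1), x i < t := by
    intro i
    induction i using Fin.induction with
    | zero => exact h0
    | succ i ih =>
      have h2 : x i.succ ≠ t := fun h => ht ⟨_, h⟩
      by_contra h3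
      exact hcon i ⟨ih, lt_of_le_of_ne (not_lt.1 h3) h2.symm⟩
  exact lt_asymm (key _) h1

lemma mem_Ioo_iff_of_notMem_Icc {a b s t : ℝ} (hst : s < t) (ha : a ∉ Icc s t)
    (hb : b ∉ Icc s t) : s ∈ Ioo a b ↔ t ∈ Ioo a b := by
  simp only [mem_Icc, mem_Ioo, not_and, not_le] at *
  constructor
  · rintro ⟨h1, h2⟩
    exact ⟨h1.trans hst, hb h2.le⟩
  · rintro ⟨h1, h2⟩
    refine ⟨?_, hst.trans h2⟩
    by_contra h3
    exact lt_asymm h1 (ha (not_lt.1 h3))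

lemma IsPCRep.jumpsWithin {u : ℝ → ℝ} {N : ℕ} {x : Fin (N + 2) → ℝ} {a : Fin (N + 1) → ℝ}
    (h : IsPCRep u x a) {S : Set ℝ}
    (hS : ∀ i, i ≠ 0 → i ≠ Fin.last (N + 1) → x i ∈ S) : JumpsWithin N S u := by
  obtain ⟨hx, h0, h1, hu⟩ := h
  refine ⟨fun i => x i.succ.castSucc, fun i => ⟨?_, ?_⟩, fun i => ?_,
    {t | t ∈ Ioo (0:ℝ) 1 ∧ u t = stepF x a t}, ae_mu01_mem_Ioo.and hu, ?_⟩
  · rw [← h0]; exact hx.monotone (Fin.zero_le _)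
  · rw [← h1]; exact hx.monotone (Fin.le_last _)
  · refine Or.inr (Or.inr (hS _ ?_ ?_))
    · simp [Fin.ext_iff]
    · simp only [ne_eq, Fin.ext_iff]; simp; omega
  · rintro s ⟨hs, hus⟩ t ⟨ht, hut⟩ hst hp
    rw [hus, hut]
    have hall : ∀ i, x i ∉ Icc s t := by
      intro i
      rcases eq_or_ne i 0 with rfl | hi0
      · rw [h0]; exact fun h => absurd h.1 (not_le.2 hs.1)
      rcases eq_or_ne i (Fin.last _) with rfl | hi1
      · rw [h1]; exact fun h => absurd h.2 (not_le.2 ht.2)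
      obtain ⟨j, rfl⟩ := Fin.exists_castSucc_eq.2 hi1
      obtain ⟨k, rfl⟩ := Fin.exists_succ_eq.2 (show j ≠ 0 from fun h => hi0 (by rw [h]; rfl))
      exact hp k
    unfold stepF
    refine Finset.sum_congr rfl fun l _ => ?_
    simp only [indicator, mem_Ioo_iff_of_notMem_Icc hst (hall l.castSucc) (hall l.succ)]

lemma JumpsWithin.exists_isPCRep {u : ℝ → ℝ} {N : ℕ} {S : Set ℝ} (h : JumpsWithin N S u) :
    ∃ j ≤ N, ∃ (x : Fin (j + 2) → ℝ) (a : Fin (j + 1) → ℝ), IsPCRep u x a ∧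
      ∀ i, i ≠ 0 → i ≠ Fin.last (j + 1) → x i ∈ S := by
  obtain ⟨p, hp01, hpS, G, hG, hu⟩ := h
  set F : Finset ℝ := insert 0 (insert 1 (Finset.univ.image p)) with hF
  have hF01 : ∀ y ∈ F, y ∈ Icc (0:ℝ) 1 := by
    intro y hy
    simp only [hF, Finset.mem_insert, Finset.mem_image, Finset.mem_univ, true_and] at hy
    rcases hy with rfl | rfl | ⟨i, rfl⟩
    · simp
    · simp
    · exact hp01 i
  have h2 : 2 ≤ F.card := by
    calc 2 = ({0, 1} : Finset ℝ).card := by simp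
      _ ≤ F.card := Finset.card_le_card (by
        intro y hy; simp at hy; rcases hy with rfl | rfl <;> simp [hF])
  have hN : F.card ≤ N + 2 := by
    have e3 := Finset.card_image_le (s := Finset.univ) (f := p)
    rw [Finset.card_univ, Fintype.card_fin] at e3
    rw [hF]
    exact (Finset.card_insert_le _ _).trans
      (Nat.succ_le_succ ((Finset.card_insert_le _ _).trans (Nat.succ_le_succ e3)))
  obtain ⟨j, hj⟩ : ∃ j, F.card = j + 2 := ⟨F.card - 2, by omega⟩
  set x : Fin (j + 2) → ℝ := fun i => F.orderEmbOfFin hj i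
  have hx : StrictMono x := (F.orderEmbOfFin hj).strictMono
  have hxF : ∀ i, x i ∈ F := fun i => F.orderEmbOfFin_mem hj i
  have hrange : range x = (F : Set ℝ) := F.range_orderEmbOfFin hj
  have h0 : x 0 = 0 := by
    obtain ⟨i, hi⟩ : (0:ℝ) ∈ range x := by rw [hrange]; simp [hF]
    refine le_antisymm ?_ (hF01 _ (hxF 0)).1
    rw [← hi]; exact hx.monotone (Fin.zero_le _)
  have h1 : x (Fin.last _) = 1 := by
    obtain ⟨i, hi⟩ : (1:ℝ) ∈ range x := by rw [hrange]; simp [hF]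
    refine le_antisymm (hF01 _ (hxF _)).2 ?_
    rw [← hi]; exact hx.monotone (Fin.le_last _)
  let a : Fin (j + 1) → ℝ := fun l =>
    if h : ∃ s, s ∈ G ∧ s ∈ Ioo (x l.castSucc) (x l.succ) then u h.choose else 0
  refine ⟨j, by omega, x, a, ⟨hx, h0, h1, ?_⟩, ?_⟩
  · filter_upwards [hG, ae_mu01_mem_Ioo, ae_mu01_notMem_finite F.finite_toSet] with t htG ht htF
    obtain ⟨l, hl⟩ := exists_mem_Ioo_of_notMem_range (x := x) (t := t) (by rw [h0]; exact ht.1)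
      (by rw [h1]; exact ht.2) (by rw [hrange]; exact htF)
    rw [stepF_apply_of_mem_Ioo hx a hl]
    have hex : ∃ s, s ∈ G ∧ s ∈ Ioo (x l.castSucc) (x l.succ) := ⟨t, htG, hl⟩
    have ha : a l = u hex.choose := dif_pos hex
    obtain ⟨hsG, hs⟩ := hex.choose_spec
    rw [ha]
    have havoid : ∀ i, p i ∉ Ioo (x l.castSucc) (x l.succ) := by
      intro i hi
      obtain ⟨q, hq⟩ : p i ∈ range x := by rw [hrange]; simp [hF]
      rw [← hq, mem_Ioo, hx.lt_iff_lt, hx.lt_iff_lt, Fin.lt_def, Fin.lt_def] at hi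
      simp at hi
      omega
    rcases lt_trichotomy t hex.choose with hlt | heq | hlt
    · exact hu _ htG _ hsG hlt fun i hi =>
        havoid i ⟨hl.1.trans_le hi.1, hi.2.trans_lt hs.2⟩
    · rw [← heq]
    · exact (hu _ hsG _ htG hlt fun i hi =>
        havoid i ⟨hs.1.trans_le hi.1, hi.2.trans_lt hl.2⟩).symm
  · intro i hi0 hi1
    have := hxF i
    simp only [hF, Finset.mem_insert, Finset.mem_image, Finset.mem_univ, true_and] at this
    rcases this with h | h | ⟨q, hq⟩
    · exact absurd (hx.injective (h.trans h0.symm)) hi0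
    · exact absurd (hx.injective (h.trans h1.symm)) hi1
    · rw [← hq]
      rcases hpS q with h | h | h
      · exact absurd (hx.injective ((hq.symm.trans h).trans h0.symm)) hi0
      · exact absurd (hx.injective ((hq.symm.trans h).trans h1.symm)) hi1
      · exact h

lemma JumpsWithin.isPCIn {u : ℝ → ℝ} {N : ℕ} {S : Set ℝ} (h : JumpsWithin N S u) :
    IsPCIn u S := by
  obtain ⟨j, -, x, a, hxa, hS⟩ := h.exists_isPCRep
  exact ⟨j + 1, x, a, hxa, hS⟩

lemma JumpsWithin.jumps_le {u : ℝ → ℝ} {N : ℕ} {S : Set ℝ} (h : JumpsWithin N S u) :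
    jumps u ≤ N := by
  obtain ⟨j, hj, x, a, hxa, hS⟩ := h.exists_isPCRep
  exact le_trans (Nat.sInf_le ⟨x, a, hxa⟩) hj

lemma IsPCIn.isPC {u : ℝ → ℝ} {S : Set ℝ} (h : IsPCIn u S) : IsPC u := by
  obtain ⟨m, x, a, hxa, -⟩ := h
  exact ⟨m, x, a, hxa⟩

lemma IsPCIn.exists_jumpsWithin {u : ℝ → ℝ} {S : Set ℝ} (h : IsPCIn u S) :
    ∃ N, JumpsWithin N S u := by
  obtain ⟨m, x, a, hxa, hS⟩ := h
  cases m with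
  | zero =>
    obtain ⟨-, h0, h1, -⟩ := hxa
    have : x (Fin.last 0) = x 0 := rfl
    exact absurd (h1.symm.trans (this.trans h0)) one_ne_zero
  | succ N => exact ⟨N, hxa.jumpsWithin hS⟩

lemma IsPC.exists_isPCRep_jumps {u : ℝ → ℝ} (h : IsPC u) :
    ∃ (x : Fin (jumps u + 2) → ℝ) (a : Fin (jumps u + 1) → ℝ), IsPCRep u x a := by
  obtain ⟨m, x, a, hxa⟩ := h
  obtain ⟨N, hN⟩ := IsPCIn.exists_jumpsWithin (S := univ) ⟨m, x, a, hxa, fun _ _ _ => mem_univ _⟩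
  obtain ⟨j, -, x, a, hxa, -⟩ := hN.exists_isPCRep
  exact Nat.sInf_mem (s := {jj : ℕ | ∃ (x : Fin (jj + 2) → ℝ) (a : Fin (jj + 1) → ℝ),
    IsPCRep u x a}) ⟨j, x, a, hxa⟩

lemma IsPC.jumpsWithin {u : ℝ → ℝ} (h : IsPC u) : JumpsWithin (jumps u) univ u := by
  obtain ⟨x, a, hxa⟩ := h.exists_isPCRep_jumps
  exact hxa.jumpsWithin fun _ _ _ => mem_univ _

lemma JumpsWithin.comp {u : ℝ → ℝ} {N : ℕ} {S : Set ℝ} (h : JumpsWithin N S u) (g : ℝ → ℝ) :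
    JumpsWithin N S (g ∘ u) := by
  obtain ⟨p, hp01, hpS, G, hG, hu⟩ := h
  exact ⟨p, hp01, hpS, G, hG, fun s hs t ht hst hp => congrArg g (hu s hs t ht hst hp)⟩

lemma JumpsWithin.mono {u : ℝ → ℝ} {M N : ℕ} {S : Set ℝ} (h : JumpsWithin M S u) (hMN : M ≤ N) :
    JumpsWithin N S u := by
  obtain ⟨p, hp01, hpS, G, hG, hu⟩ := h
  refine ⟨fun i => if h : i.1 < M then p ⟨i, h⟩ else 0, fun i => ?_, fun i => ?_, G, hG,
    fun s hs t ht hst hp => hu s hs t ht hst fun i => ?_⟩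
  · dsimp only; split_ifs
    · exact hp01 _
    · simp
  · dsimp only; split_ifs
    · exact hpS _
    · simp
  · have := hp ⟨i, i.2.trans_le hMN⟩
    simpa using this

lemma jumpsWithin_const (c : ℝ) (S : Set ℝ) : JumpsWithin 0 S (fun _ => c) :=
  ⟨Fin.elim0, fun i => i.elim0, fun i => i.elim0, univ, by simp, fun _ _ _ _ _ _ => rfl⟩

lemma integrable_stepF {m : ℕ} (x : Fin (m + 1) → ℝ) (a : Fin m → ℝ) :
    Integrable (stepF x a) mu01 := by
  unfold stepF
  exact integrable_finsetSum _ fun l _ => (integrable_const _).indicator measurableSet_Ioo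

lemma IsPC.integrable {u : ℝ → ℝ} (h : IsPC u) : Integrable u mu01 := by
  obtain ⟨m, x, a, -, -, -, hu⟩ := h
  exact (integrable_stepF x a).congr (hu.mono fun _ h => h.symm)

/-- The class of functions with at most `N` jumps is closed under a.e. convergence. -/
lemma jumpsWithin_of_tendsto_ae {u : ℝ → ℝ} {v : ℕ → ℝ → ℝ} {N : ℕ}
    (hv : ∀ k, JumpsWithin N univ (v k))
    (hlim : ∀ᵐ t ∂mu01, Tendsto (fun k => v k t) atTop (nhds (u t))) :
    JumpsWithin N univ u := by
  choose p hp01 _ G hG hvG using hv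
  obtain ⟨q, hq, φ, hφ, hpq⟩ := (isCompact_univ_pi fun _ : Fin N => isCompact_Icc (a := (0:ℝ))
    (b := 1)).tendsto_subseq (x := p) fun k i _ => hp01 k i
  refine ⟨q, fun i => hq i trivial, fun i => by simp,
    {t | (∀ k, t ∈ G k) ∧ Tendsto (fun k => v k t) atTop (nhds (u t))},
    (ae_all_iff.2 hG).and hlim, ?_⟩
  rintro s ⟨hsG, hs⟩ t ⟨htG, ht⟩ hst hqi
  have hev : ∀ᶠ k in atTop, ∀ i, p (φ k) i ∉ Icc s t := by
    rw [eventually_all]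
    intro i
    exact (tendsto_pi_nhds.1 hpq i).eventually (isClosed_Icc.isOpen_compl.mem_nhds (hqi i))
  refine tendsto_nhds_unique_of_eventuallyEq (hs.comp hφ.tendsto_atTop)
    (ht.comp hφ.tendsto_atTop) ?_
  filter_upwards [hev] with k hk
  exact hvG _ s (hsG _) t (htG _) hst hk

lemma relation_of_consecutive {X : Set ℝ} (hX : X.Finite) {Q : ℝ → ℝ → Prop}
    (htrans : ∀ a b c, a < b → b < c → Q a b → Q b c → Q a c)
    (hbase : ∀ a ∈ insert (0:ℝ) (insert 1 X), ∀ b ∈ insert (0:ℝ) (insert 1 X), a < b →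
      Ioo a b ∩ X = ∅ → Q a b) :
    ∀ a ∈ insert (0:ℝ) (insert 1 X), ∀ b ∈ insert (0:ℝ) (insert 1 X), a < b → Q a b := by
  intro a ha b hb hab
  induction hn : (Ioo a b ∩ X).ncard using Nat.strong_induction_on generalizing a b with
  | _ n ih =>
    rcases (Ioo a b ∩ X).eq_empty_or_nonempty with hE | ⟨c, hc, hcX⟩
    · exact hbase a ha b hb hab hE
    · have hc' : c ∈ insert (0:ℝ) (insert 1 X) := Or.inr (Or.inr hcX)
      have hfin : (Ioo a b ∩ X).Finite := hX.subset inter_subset_right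
      have h1 : (Ioo a c ∩ X).ncard < n := by
        rw [← hn]
        refine ncard_lt_ncard ⟨fun t ht => ⟨⟨ht.1.1, ht.1.2.trans hc.2⟩, ht.2⟩, fun h => ?_⟩ hfin
        exact lt_irrefl _ (h ⟨hc, hcX⟩).1.2
      have h2 : (Ioo c b ∩ X).ncard < n := by
        rw [← hn]
        refine ncard_lt_ncard ⟨fun t ht => ⟨⟨hc.1.trans ht.1.1, ht.1.2⟩, ht.2⟩, fun h => ?_⟩ hfin
        exact lt_irrefl _ (h ⟨hc, hcX⟩).1.1
      exact htrans a c b hc.1 hc.2 (ih _ h1 a ha c hc' hc.1 rfl) (ih _ h2 c hc' b hb hc.2 rfl)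

lemma eventually_mesh_lt {X : ℕ → Set ℝ} (hXnest : ∀ k, X k ⊆ X (k + 1))
    (hXsub : ∀ k, X k ⊆ Icc 0 1) (hXdense : Icc (0:ℝ) 1 ⊆ closure (⋃ k, X k))
    {δ : ℝ} (hδ : 0 < δ) :
    ∀ᶠ k in atTop, ∀ a ∈ insert (0:ℝ) (insert 1 (X k)), ∀ b ∈ insert (0:ℝ) (insert 1 (X k)),
      a < b → Ioo a b ∩ X k = ∅ → b - a < δ := by
  have hmono : Monotone X := monotone_nat_of_le_succ hXnest
  obtain ⟨n, hn⟩ := exists_nat_gt (2 / δ)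
  have hn0 : (0:ℝ) < n := lt_trans (by positivity) hn
  have hev : ∀ᶠ k in atTop, ∀ i ∈ Finset.range n,
      (Ioo ((i:ℝ) / n) ((i + 1) / n) ∩ X k).Nonempty := by
    rw [Filter.eventually_all_finset]
    intro i hi
    have hi' : (i:ℝ) + 1 ≤ n := by exact_mod_cast Finset.mem_range.1 hi
    have hm : ((i:ℝ) + 1 / 2) / n ∈ Ioo ((i:ℝ) / n) ((i + 1) / n) := by
      constructor <;> gcongr <;> linarith
    have hm01 : ((i:ℝ) + 1 / 2) / n ∈ Icc (0:ℝ) 1 := by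
      refine ⟨by positivity, ?_⟩
      rw [div_le_one hn0]; linarith
    obtain ⟨y, hy, hyX⟩ := mem_closure_iff.1 (hXdense hm01) _ isOpen_Ioo hm
    obtain ⟨K, hK⟩ := mem_iUnion.1 hyX
    filter_upwards [eventually_ge_atTop K] with k hk
    exact ⟨y, hy, hmono hk hK⟩
  filter_upwards [hev] with k hk a ha b hb hab hE
  by_contra hlt
  have hX01 : insert (0:ℝ) (insert 1 (X k)) ⊆ Icc 0 1 := by
    intro y hy
    rcases hy with rfl | rfl | hy
    · simp
    · simp
    · exact hXsub k hy
  have ha0 := (hX01 ha).1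
  have hb1 := (hX01 hb).2
  have h2n : 2 < δ * n := by rw [div_lt_iff₀ hδ] at hn; linarith
  set i := ⌈a * n⌉₊ with hi
  have h1 : a * n ≤ i := Nat.le_ceil _
  have h2 : (i:ℝ) < a * n + 1 := Nat.ceil_lt_add_one (by positivity)
  have h3 : (i:ℝ) + 1 < b * n := by nlinarith [not_lt.1 hlt]
  have hin : i < n := by
    have : (i:ℝ) < n := by nlinarith
    exact_mod_cast this
  obtain ⟨y, hy, hyX⟩ := hk i (Finset.mem_range.2 hin)
  have : y ∈ Ioo a b ∩ X k := by
    refine ⟨⟨lt_of_le_of_lt ?_ hy.1, hy.2.trans ?_⟩, hyX⟩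
    · rw [le_div_iff₀ hn0]; exact h1
    · rw [div_lt_iff₀ hn0]; exact h3
  rw [hE] at this
  exact this

lemma exists_grid_tendsto {X : ℕ → Set ℝ} (hXfin : ∀ k, (X k).Finite)
    (hXnest : ∀ k, X k ⊆ X (k + 1)) (hXdense : Icc (0:ℝ) 1 ⊆ closure (⋃ k, X k))
    {y : ℝ} (hy : y ∈ Icc (0:ℝ) 1) :
    ∃ z : ℕ → ℝ, (∀ k, z k ∈ insert (0:ℝ) (insert 1 (X k))) ∧ Tendsto z atTop (nhds y) ∧
      ∀ k, y ∈ insert (0:ℝ) (insert 1 (X k)) → z k = y := by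
  have hmono : Monotone X := monotone_nat_of_le_succ hXnest
  have hex : ∀ k, ∃ z ∈ insert (0:ℝ) (insert 1 (X k)),
      Metric.infDist y (insert (0:ℝ) (insert 1 (X k))) = dist y z := fun k =>
    (((hXfin k).insert 1).insert 0).isCompact.exists_infDist_eq_dist ⟨0, by simp⟩ y
  choose z hz hzd using hex
  refine ⟨z, hz, ?_, fun k hk => ?_⟩
  · rw [Metric.tendsto_atTop]
    intro ε hε
    obtain ⟨w, hwX, hw⟩ := Metric.mem_closure_iff.1 (hXdense hy) ε hε
    obtain ⟨K, hK⟩ := mem_iUnion.1 hwX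
    refine ⟨K, fun k hk => ?_⟩
    rw [dist_comm, ← hzd k]
    have hw' : w ∈ insert (0:ℝ) (insert 1 (X k)) := Or.inr (Or.inr (hmono hk hK))
    exact (Metric.infDist_le_dist_of_mem hw').trans_lt hw
  · have := hzd k
    rw [Metric.infDist_zero_of_mem hk] at this
    exact (eq_of_dist_eq_zero this.symm).symm

lemma integrable_of_const_on_cells {X : Set ℝ} (hX : X.Finite) {fk : ℝ → ℝ}
    (h : ∀ a ∈ insert (0:ℝ) (insert 1 X), ∀ b ∈ insert (0:ℝ) (insert 1 X), a < b →
      Ioo a b ∩ X = ∅ → ∃ c, ∀ t ∈ Ioo a b, fk t = c) :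
    IntervalIntegrable fk volume 0 1 := by
  refine relation_of_consecutive hX (Q := fun a b => IntervalIntegrable fk volume a b)
    (fun a b c _ _ h1 h2 => h1.trans h2) ?_ 0 (by simp) 1 (by simp) one_pos
  intro a ha b hb hab hE
  obtain ⟨c, hc⟩ := h a ha b hb hab hE
  rw [intervalIntegrable_iff_integrableOn_Ioo_of_le hab.le]
  exact (integrableOn_const (C := c) (by simp)).congr_fun (fun t ht => (hc t ht).symm)
    measurableSet_Ioo

lemma integral_abs_sub_le_of_cells {X : Set ℝ} (hX : X.Finite)
    {f fk g : ℝ → ℝ} (hf : IntervalIntegrable f volume 0 1)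
    (hfk : IntervalIntegrable fk volume 0 1) (hg : IntervalIntegrable g volume 0 1) {ε : ℝ}
    (h : ∀ a ∈ insert (0:ℝ) (insert 1 X), ∀ b ∈ insert (0:ℝ) (insert 1 X), 0 ≤ a → b ≤ 1 → a < b →
      Ioo a b ∩ X = ∅ → ∀ t ∈ Ioo a b,
        |fk t - f t| ≤ (b - a)⁻¹ * (∫ s in a..b, |f s - g s|) + ε + |f t - g t|) :
    ∫ t in (0:ℝ)..1, |fk t - f t| ≤ 2 * (∫ t in (0:ℝ)..1, |f t - g t|) + ε := by
  have key := relation_of_consecutive hX (Q := fun a b => 0 ≤ a → b ≤ 1 →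
    ∫ t in a..b, |fk t - f t| ≤ 2 * (∫ t in a..b, |f t - g t|) + ε * (b - a)) ?_ ?_
    0 (by simp) 1 (by simp) one_pos le_rfl le_rfl
  · simpa using key
  · intro a b c hab hbc h1 h2 ha hc
    have i1 : ∀ p q, 0 ≤ p → p ≤ q → q ≤ 1 →
        IntervalIntegrable (fun t => |fk t - f t|) volume p q := fun p q hp hpq hq =>
      (hfk.sub hf).abs.mono_set (by
        rw [uIcc_of_le hpq, uIcc_of_le zero_le_one]; exact Icc_subset_Icc hp hq)
    have i2 : ∀ p q, 0 ≤ p → p ≤ q → q ≤ 1 →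
        IntervalIntegrable (fun t => |f t - g t|) volume p q := fun p q hp hpq hq =>
      (hf.sub hg).abs.mono_set (by
        rw [uIcc_of_le hpq, uIcc_of_le zero_le_one]; exact Icc_subset_Icc hp hq)
    rw [← intervalIntegral.integral_add_adjacent_intervals
        (i1 a b ha hab.le (hbc.le.trans hc)) (i1 b c (ha.trans hab.le) hbc.le hc),
      ← intervalIntegral.integral_add_adjacent_intervals
        (i2 a b ha hab.le (hbc.le.trans hc)) (i2 b c (ha.trans hab.le) hbc.le hc)]
    have := h1 ha (hbc.le.trans hc)
    have := h2 (ha.trans hab.le) hc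
    linarith
  · intro a ha b hb hab hE ha0 hb1
    have hsub : uIcc a b ⊆ uIcc 0 1 := by
      rw [uIcc_of_le hab.le, uIcc_of_le zero_le_one]; exact Icc_subset_Icc ha0 hb1
    have i1 : IntervalIntegrable (fun t => |fk t - f t|) volume a b :=
      (hfk.sub hf).abs.mono_set hsub
    have i2 : IntervalIntegrable (fun t => |f t - g t|) volume a b :=
      (hf.sub hg).abs.mono_set hsub
    set D := ∫ s in a..b, |f s - g s|
    calc ∫ t in a..b, |fk t - f t|
        ≤ ∫ t in a..b, ((b - a)⁻¹ * D + ε + |f t - g t|) := by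
          refine intervalIntegral.integral_mono_on_of_le_Ioo hab.le i1
            (intervalIntegrable_const.add i2) fun t ht => h a ha b hb ha0 hb1 hab hE t ht
      _ = 2 * D + ε * (b - a) := by
          rw [intervalIntegral.integral_add intervalIntegrable_const i2,
            intervalIntegral.integral_const]
          have : b - a ≠ 0 := (sub_pos.2 hab).ne'
          simp only [smul_eq_mul]
          field_simp
          ring

lemma L1dist_eq_intervalIntegral (u v : ℝ → ℝ) :
    L1dist u v = ∫ t in (0:ℝ)..1, |u t - v t| := by
  unfold L1dist mu01
  rw [integral_Icc_eq_integral_Ioc, intervalIntegral.integral_of_le zero_le_one]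

lemma integrable_mu01_iff {u : ℝ → ℝ} : Integrable u mu01 ↔ IntervalIntegrable u volume 0 1 := by
  rw [intervalIntegrable_iff_integrableOn_Icc_of_le zero_le_one]; rfl

lemma abs_average_sub_le {f g : ℝ → ℝ} {a b ε t : ℝ} (hab : a < b)
    (hf : IntervalIntegrable f volume a b) (hg : IntervalIntegrable g volume a b)
    (hosc : ∀ s ∈ Icc a b, |g s - g t| ≤ ε) :
    |(b - a)⁻¹ * (∫ s in Ioo a b, f s) - f t| ≤
      (b - a)⁻¹ * (∫ s in a..b, |f s - g s|) + ε + |f t - g t| := by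
  have hba : 0 < b - a := sub_pos.2 hab
  have e1 : (b - a)⁻¹ * (∫ s in Ioo a b, f s) - g t
      = (b - a)⁻¹ * ∫ s in a..b, (f s - g t) := by
    rw [intervalIntegral.integral_sub hf intervalIntegrable_const,
      intervalIntegral.integral_const, intervalIntegral.integral_of_le hab.le,
      integral_Ioc_eq_integral_Ioo, smul_eq_mul]
    field_simp
  have e2 : |∫ s in a..b, (f s - g t)| ≤ (∫ s in a..b, |f s - g s|) + ε * (b - a) := by
    calc |∫ s in a..b, (f s - g t)| ≤ ∫ s in a..b, |f s - g t| :=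
          intervalIntegral.abs_integral_le_integral_abs hab.le
      _ ≤ ∫ s in a..b, (|f s - g s| + ε) := by
          refine intervalIntegral.integral_mono_on hab.le (hf.sub intervalIntegrable_const).abs
            ((hf.sub hg).abs.add intervalIntegrable_const) fun s hs => ?_
          have := abs_sub_le (f s) (g s) (g t)
          have := hosc s hs
          linarith
      _ = _ := by
          rw [intervalIntegral.integral_add (hf.sub hg).abs intervalIntegrable_const,
            intervalIntegral.integral_const, smul_eq_mul]
          ring
  have e3 : |(b - a)⁻¹ * (∫ s in Ioo a b, f s) - g t| ≤
      (b - a)⁻¹ * (∫ s in a..b, |f s - g s|) + ε := by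
    rw [e1, abs_mul, abs_of_pos (inv_pos.2 hba)]
    calc _ ≤ (b - a)⁻¹ * ((∫ s in a..b, |f s - g s|) + ε * (b - a)) := by gcongr
      _ = _ := by field_simp
  have := abs_sub_le ((b - a)⁻¹ * (∫ s in Ioo a b, f s)) (g t) (f t)
  rw [abs_sub_comm (g t)] at this
  linarith

lemma integrable_of_sampled {X : Set ℝ} (hX : X.Finite) {f fk : ℝ → ℝ}
    (h : IntegralSampled X f fk ∨ PointSampled X f fk) : Integrable fk mu01 := by
  rw [integrable_mu01_iff]
  refine integrable_of_const_on_cells hX fun a ha b hb hab hE => ?_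
  rcases h with h | h
  · exact ⟨_, h a b ha hb hab hE⟩
  · exact ⟨_, h a b ha hb hab hE⟩

lemma tendsto_L1dist_of_cells {f : ℝ → ℝ} (hf : Integrable f mu01)
    {X : ℕ → Set ℝ} (hXfin : ∀ k, (X k).Finite) (hXsub : ∀ k, X k ⊆ Icc 0 1)
    (hXnest : ∀ k, X k ⊆ X (k + 1)) (hXdense : Icc (0:ℝ) 1 ⊆ closure (⋃ k, X k))
    {fseq : ℕ → ℝ → ℝ} (hfseq : ∀ k, Integrable (fseq k) mu01)
    (h : ∀ ε > 0, ∃ g : ℝ → ℝ, ContinuousOn g (Icc 0 1) ∧ L1dist f g ≤ ε ∧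
      ∀ k, ∀ a ∈ insert (0:ℝ) (insert 1 (X k)), ∀ b ∈ insert (0:ℝ) (insert 1 (X k)),
        0 ≤ a → b ≤ 1 → a < b → Ioo a b ∩ X k = ∅ → ∀ t ∈ Ioo a b,
        (∀ s ∈ Icc a b, |g s - g t| ≤ ε) → |fseq k t - f t| ≤
          (b - a)⁻¹ * (∫ s in a..b, |f s - g s|) + ε + |f t - g t|) :
    Tendsto (fun k => L1dist (fseq k) f) atTop (nhds 0) := by
  rw [Metric.tendsto_nhds]
  intro ε hε
  obtain ⟨g, hgc, hfg, hcell⟩ := h (ε / 4) (by positivity)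
  have hg : IntervalIntegrable g volume 0 1 :=
    ContinuousOn.intervalIntegrable (by rwa [uIcc_of_le zero_le_one])
  obtain ⟨δ, hδ, hδg⟩ := Metric.uniformContinuousOn_iff.1
    (isCompact_Icc.uniformContinuousOn_of_continuous hgc) (ε / 4) (by positivity)
  filter_upwards [eventually_mesh_lt hXnest hXsub hXdense hδ] with k hk
  have key := integral_abs_sub_le_of_cells (hXfin k) (integrable_mu01_iff.1 hf)
    (integrable_mu01_iff.1 (hfseq k)) hg (ε := ε / 4) fun a ha b hb ha0 hb1 hab hE t ht => by
      refine hcell k a ha b hb ha0 hb1 hab hE t ht fun s hs => ?_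
      have hst : dist s t < δ := by
        have := hk a ha b hb hab hE
        rw [Real.dist_eq, abs_lt]
        constructor <;> linarith [hs.1, hs.2, ht.1, ht.2]
      have := hδg s ⟨ha0.trans hs.1, hs.2.trans hb1⟩ t
        ⟨ha0.trans ht.1.le, ht.2.le.trans hb1⟩ hst
      rw [Real.dist_eq] at this
      exact this.le
  rw [← L1dist_eq_intervalIntegral, ← L1dist_eq_intervalIntegral] at key
  have h0 : 0 ≤ L1dist (fseq k) f := integral_nonneg fun _ => abs_nonneg _
  rw [Real.dist_eq, sub_zero, abs_of_nonneg h0]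
  linarith

lemma tendsto_L1dist_of_sampled {f : ℝ → ℝ} (hf : Integrable f mu01)
    {X : ℕ → Set ℝ} (hXfin : ∀ k, (X k).Finite) (hXsub : ∀ k, X k ⊆ Icc 0 1)
    (hXnest : ∀ k, X k ⊆ X (k + 1)) (hXdense : Icc (0:ℝ) 1 ⊆ closure (⋃ k, X k))
    {fseq : ℕ → ℝ → ℝ} (hfseq : ∀ k, Integrable (fseq k) mu01)
    (hsample : (∀ k, IntegralSampled (X k) f (fseq k)) ∨
      (ContinuousOn f (Icc 0 1) ∧ ∀ k, PointSampled (X k) f (fseq k))) :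
    Tendsto (fun k => L1dist (fseq k) f) atTop (nhds 0) := by
  refine tendsto_L1dist_of_cells hf hXfin hXsub hXnest hXdense hfseq fun ε hε => ?_
  rcases hsample with h | ⟨hfc, h⟩
  · have : mu01.Regular := by unfold mu01; infer_instance
    obtain ⟨g, -, hfg, hgc, -⟩ := hf.exists_hasCompactSupport_integral_sub_le hε
    refine ⟨g, hgc.continuousOn, hfg, fun k a ha b hb ha0 hb1 hab hE t ht hosc => ?_⟩
    rw [h k a b ha hb hab hE t ht]
    refine abs_average_sub_le hab ((integrable_mu01_iff.1 hf).mono_set ?_)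
      (hgc.intervalIntegrable _ _) hosc
    rw [uIcc_of_le hab.le, uIcc_of_le zero_le_one]
    exact Icc_subset_Icc ha0 hb1
  · refine ⟨f, hfc, by simpa [L1dist] using hε.le,
      fun k a ha b hb ha0 hb1 hab hE t ht hosc => ?_⟩
    rw [h k a b ha hb hab hE t ht]
    simpa using hosc ((a + b) / 2) ⟨by linarith, by linarith⟩

lemma L1dist_nonneg (u v : ℝ → ℝ) : 0 ≤ L1dist u v := integral_nonneg fun _ => abs_nonneg _

lemma L1dist_comm (u v : ℝ → ℝ) : L1dist u v = L1dist v u := by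
  simp only [L1dist, abs_sub_comm]

lemma L1dist_triangle {u v w : ℝ → ℝ} (hu : Integrable u mu01) (hv : Integrable v mu01)
    (hw : Integrable w mu01) : L1dist u w ≤ L1dist u v + L1dist v w := by
  have hadd : ∫ t, (|u t - v t| + |v t - w t|) ∂mu01 = L1dist u v + L1dist v w :=
    integral_add (hu.sub hv).abs (hv.sub hw).abs
  rw [← hadd]
  exact integral_mono (hu.sub hw).abs ((hu.sub hv).abs.add (hv.sub hw).abs)
    fun t => abs_sub_le _ _ _

lemma eLpNorm_sub_eq_ofReal_L1dist {u v : ℝ → ℝ} (hu : Integrable u mu01)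
    (hv : Integrable v mu01) : eLpNorm (u - v) 1 mu01 = ENNReal.ofReal (L1dist u v) := by
  rw [eLpNorm_one_eq_lintegral_enorm, ← ofReal_integral_norm_eq_lintegral_enorm (hu.sub hv)]
  rfl

lemma tendsto_L1dist_iff {u : ℕ → ℝ → ℝ} {v : ℝ → ℝ} (hu : ∀ k, Integrable (u k) mu01)
    (hv : Integrable v mu01) : Tendsto (fun k => L1dist (u k) v) atTop (nhds 0) ↔
      Tendsto (fun k => eLpNorm (u k - v) 1 mu01) atTop (nhds 0) := by
  simp_rw [eLpNorm_sub_eq_ofReal_L1dist (hu _) hv]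
  constructor
  · intro h
    simpa using ENNReal.tendsto_ofReal h
  · intro h
    have := (ENNReal.tendsto_toReal ENNReal.zero_ne_top).comp h
    simpa [Function.comp_def, ENNReal.toReal_ofReal (L1dist_nonneg _ _)] using this

lemma tendsto_L1dist_pair {u f : ℝ → ℝ} {useq fseq : ℕ → ℝ → ℝ} (hu : Integrable u mu01)
    (hf : Integrable f mu01) (hus : ∀ k, Integrable (useq k) mu01)
    (hfs : ∀ k, Integrable (fseq k) mu01)
    (h1 : Tendsto (fun k => L1dist (useq k) u) atTop (nhds 0))
    (h2 : Tendsto (fun k => L1dist (fseq k) f) atTop (nhds 0)) :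
    Tendsto (fun k => L1dist (useq k) (fseq k)) atTop (nhds (L1dist u f)) := by
  rw [tendsto_iff_dist_tendsto_zero]
  refine squeeze_zero (fun _ => dist_nonneg) (fun k => ?_) (by simpa using h1.add h2)
  have e1 := L1dist_triangle (hus k) hu (hfs k)
  have e2 := L1dist_triangle hu hf (hfs k)
  have e3 := L1dist_triangle hu (hus k) hf
  have e4 := L1dist_triangle (hus k) (hfs k) hf
  rw [L1dist_comm f] at e2
  rw [L1dist_comm u (useq k)] at e3
  rw [Real.dist_eq, abs_le]
  constructor <;> linarith

lemma jumpsWithin_of_tendsto_L1dist {u : ℝ → ℝ} {v : ℕ → ℝ → ℝ} {N : ℕ}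
    (hu : Integrable u mu01) (hv : ∀ k, JumpsWithin N univ (v k))
    (hlim : Tendsto (fun k => L1dist (v k) u) atTop (nhds 0)) : JumpsWithin N univ u := by
  have hvi : ∀ k, Integrable (v k) mu01 := fun k => (hv k).isPCIn.isPC.integrable
  obtain ⟨φ, -, hφ⟩ := (tendstoInMeasure_of_tendsto_eLpNorm one_ne_zero
    (fun k => (hvi k).aestronglyMeasurable) hu.aestronglyMeasurable
    ((tendsto_L1dist_iff hvi hu).1 hlim)).exists_seq_tendsto_ae
  exact jumpsWithin_of_tendsto_ae (fun k => hv (φ k)) hφ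

lemma potts_le_of_jumpsWithin {γ : ℝ} (hγ : 0 < γ) (f : ℝ → ℝ) {u : ℝ → ℝ} {N : ℕ} {S : Set ℝ}
    (h : JumpsWithin N S u) : Potts γ f u ≤ ENNReal.ofReal (γ * N + L1dist u f) := by
  unfold Potts
  rw [if_pos h.isPCIn.isPC]
  have : (jumps u : ℝ) ≤ N := by exact_mod_cast h.jumps_le
  gcongr

lemma pottsIn_le_of_jumpsWithin {γ : ℝ} (hγ : 0 < γ) (f : ℝ → ℝ) {u : ℝ → ℝ} {N : ℕ} {S : Set ℝ}
    (h : JumpsWithin N S u) : PottsIn γ f S u ≤ ENNReal.ofReal (γ * N + L1dist u f) := by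
  unfold PottsIn
  rw [if_pos h.isPCIn]
  have : (jumps u : ℝ) ≤ N := by exact_mod_cast h.jumps_le
  gcongr

lemma le_of_pottsIn_le {γ B : ℝ} {f u : ℝ → ℝ} {S : Set ℝ} (hB : 0 ≤ B)
    (h : PottsIn γ f S u ≤ ENNReal.ofReal B) : IsPCIn u S ∧ γ * jumps u + L1dist u f ≤ B := by
  unfold PottsIn at h
  split_ifs at h with hu
  · exact ⟨hu, (ENNReal.ofReal_le_ofReal_iff hB).1 h⟩
  · exact absurd h (by simp)

/-- The liminf inequality, for arbitrary data converging in `L¹`. -/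
lemma potts_le_liminf {γ : ℝ} (hγ : 0 < γ) {f u : ℝ → ℝ} {fseq useq : ℕ → ℝ → ℝ} (X : ℕ → Set ℝ)
    (hf : Integrable f mu01) (hfs : ∀ k, Integrable (fseq k) mu01)
    (hflim : Tendsto (fun k => L1dist (fseq k) f) atTop (nhds 0)) (hu : Integrable u mu01)
    (hlim : Tendsto (fun k => L1dist (useq k) u) atTop (nhds 0)) :
    Potts γ f u ≤ liminf (fun k => PottsIn γ (fseq k) (X k) (useq k)) atTop := by
  by_contra hcon
  obtain ⟨B', hB1, hB2⟩ := exists_between (not_le.1 hcon)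
  obtain ⟨B, hB0, rfl⟩ : ∃ B : ℝ, 0 ≤ B ∧ B' = ENNReal.ofReal B :=
    ⟨B'.toReal, ENNReal.toReal_nonneg, (ENNReal.ofReal_toReal hB2.ne_top).symm⟩
  have hfreq : ∃ᶠ k in atTop, PottsIn γ (fseq k) (X k) (useq k) < ENNReal.ofReal B :=
    frequently_lt_of_liminf_lt (by isBoundedDefault) hB1
  obtain ⟨φ, hφ, hφB⟩ := extraction_of_frequently_atTop hfreq
  have hall := fun k => le_of_pottsIn_le hB0 (hφB k).le
  have hbdd : ∀ k, jumps (useq (φ k)) < ⌊B / γ⌋₊ + 1 := fun k => by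
    rw [Nat.lt_add_one_iff]
    refine Nat.le_floor ?_
    rw [le_div_iff₀ hγ]
    have := (hall k).2
    have := L1dist_nonneg (useq (φ k)) (fseq (φ k))
    linarith
  obtain ⟨N, hN⟩ : ∃ N, ∃ᶠ k in atTop, jumps (useq (φ k)) = N := by
    by_contra hno
    push Not at hno
    have : ∀ᶠ k in atTop, ∀ N ∈ Finset.range (⌊B / γ⌋₊ + 1), jumps (useq (φ k)) ≠ N := by
      rw [Filter.eventually_all_finset]
      exact fun N _ => hno N
    obtain ⟨k, hk⟩ := this.exists
    exact hk _ (Finset.mem_range.2 (hbdd k)) rfl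
  obtain ⟨ψ, hψ, hψN⟩ := extraction_of_frequently_atTop hN
  have hθ : Tendsto (φ ∘ ψ) atTop atTop := (hφ.comp hψ).tendsto_atTop
  have hJ : ∀ k, JumpsWithin N univ (useq (φ (ψ k))) := fun k => by
    have := (hall (ψ k)).1.isPC.jumpsWithin
    rwa [hψN k] at this
  have hJu : JumpsWithin N univ u := jumpsWithin_of_tendsto_L1dist hu hJ (hlim.comp hθ)
  have hlim2 := tendsto_L1dist_pair hu hf (fun k => (hJ k).isPCIn.isPC.integrable)
    (fun k => hfs (φ (ψ k))) (hlim.comp hθ) (hflim.comp hθ)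
  have hle : γ * N + L1dist u f ≤ B := by
    refine le_of_tendsto (hlim2.const_add (γ * N)) (Eventually.of_forall fun k => ?_)
    have := (hall (ψ k)).2
    rwa [hψN k] at this
  exact absurd ((potts_le_of_jumpsWithin hγ f hJu).trans (ENNReal.ofReal_le_ofReal hle))
    (not_le.2 hB2)

/-- Piecewise constant functions are `L¹`-limits of functions with no more jumps, all of them
located on the grids `X k`. -/
lemma exists_recovery {X : ℕ → Set ℝ} (hXfin : ∀ k, (X k).Finite)
    (hXsub : ∀ k, X k ⊆ Icc 0 1)
    (hXnest : ∀ k, X k ⊆ X (k + 1)) (hXdense : Icc (0:ℝ) 1 ⊆ closure (⋃ k, X k))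
    {u : ℝ → ℝ} (hu : IsPC u) :
    ∃ useq : ℕ → ℝ → ℝ, (∀ k, JumpsWithin (jumps u) (X k) (useq k)) ∧
      Tendsto (fun k => L1dist (useq k) u) atTop (nhds 0) := by
  obtain ⟨x, a, hx, h0, h1, hxa⟩ := hu.exists_isPCRep_jumps
  have hx01 : ∀ i, x i ∈ Icc (0:ℝ) 1 := fun i =>
    ⟨h0 ▸ hx.monotone (Fin.zero_le _), h1 ▸ hx.monotone (Fin.le_last _)⟩
  choose z hzX hz hzeq using fun i => exists_grid_tendsto hXfin hXnest hXdense (hx01 i)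
  have hz01 : ∀ i k, z i k ∈ Icc (0:ℝ) 1 := by
    intro i k
    rcases hzX i k with h | h | h
    · rw [h]; simp
    · rw [h]; simp
    · exact hXsub k h
  let useq : ℕ → ℝ → ℝ := fun k => stepF (fun i => z i k) a
  have hae : ∀ᵐ t ∂mu01, Tendsto (fun k => useq k t) atTop (nhds (u t)) := by
    filter_upwards [hxa, ae_mu01_notMem_finite (finite_range x)] with t ht htx
    rw [ht]
    refine tendsto_finsetSum _ fun l _ => ?_
    have hiff : ∀ i, ∀ᶠ k in atTop, ((z i k < t ↔ x i < t) ∧ (t < z i k ↔ t < x i)) := by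
      intro i
      rcases lt_or_gt_of_ne (fun h => htx ⟨i, h⟩ : x i ≠ t) with hlt | hlt
      · filter_upwards [(hz i).eventually (gt_mem_nhds hlt)] with k hk
        exact ⟨by tauto, iff_of_false hk.not_gt hlt.not_gt⟩
      · filter_upwards [(hz i).eventually (lt_mem_nhds hlt)] with k hk
        exact ⟨iff_of_false hk.not_gt hlt.not_gt, by tauto⟩
    refine tendsto_const_nhds.congr' ?_
    filter_upwards [hiff l.castSucc, hiff l.succ] with k hk1 hk2
    simp only [indicator, mem_Ioo, hk1.1, hk2.2]
  refine ⟨useq, fun k => ?_, ?_⟩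
  · refine ⟨fun i => z i.succ.castSucc k, fun i => hz01 _ _, fun i => hzX _ _, Ioo 0 1,
      ae_mu01_mem_Ioo, fun s hs t ht hst hp => ?_⟩
    have hall : ∀ i, z i k ∉ Icc s t := by
      intro i
      rcases eq_or_ne i 0 with rfl | hi0
      · rw [hzeq 0 k (by rw [h0]; simp), h0]; exact fun h => absurd h.1 (not_le.2 hs.1)
      rcases eq_or_ne i (Fin.last _) with rfl | hi1
      · rw [hzeq _ k (by rw [h1]; simp), h1]; exact fun h => absurd h.2 (not_le.2 ht.2)
      obtain ⟨j, rfl⟩ := Fin.exists_castSucc_eq.2 hi1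
      obtain ⟨q, rfl⟩ := Fin.exists_succ_eq.2 (show j ≠ 0 from fun h => hi0 (by rw [h]; rfl))
      exact hp q
    refine Finset.sum_congr rfl fun l _ => ?_
    simp only [indicator, mem_Ioo_iff_of_notMem_Icc hst (hall l.castSucc) (hall l.succ)]
  · have hbound : ∀ k t, |useq k t| ≤ ∑ l, |a l| := fun k t =>
      (Finset.abs_sum_le_sum_abs _ _).trans (Finset.sum_le_sum fun l _ => by
        by_cases h : t ∈ Ioo (z l.castSucc k) (z l.succ k) <;> simp [indicator, h])
    have := tendsto_integral_of_dominated_convergence (μ := mu01)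
      (F := fun k t => |useq k t - u t|) (f := fun _ => 0) (fun t => (∑ l, |a l|) + |u t|)
      (fun k => ((integrable_stepF _ _).sub hu.integrable).abs.aestronglyMeasurable)
      ((integrable_const _).add hu.integrable.abs)
      (fun k => Eventually.of_forall fun t => by
        rw [Real.norm_eq_abs, abs_abs]
        exact (abs_sub _ _).trans (by gcongr; exact hbound k t))
      (hae.mono fun t ht => by simpa using (ht.sub_const (u t)).abs)
    simpa [L1dist] using this

lemma exists_recovery_potts {γ : ℝ} (hγ : 0 < γ) {X : ℕ → Set ℝ} (hXfin : ∀ k, (X k).Finite)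
    (hXsub : ∀ k, X k ⊆ Icc 0 1)
    (hXnest : ∀ k, X k ⊆ X (k + 1)) (hXdense : Icc (0:ℝ) 1 ⊆ closure (⋃ k, X k))
    {f : ℝ → ℝ} {fseq : ℕ → ℝ → ℝ} (hf : Integrable f mu01) (hfs : ∀ k, Integrable (fseq k) mu01)
    (hflim : Tendsto (fun k => L1dist (fseq k) f) atTop (nhds 0))
    {u : ℝ → ℝ} (hu : Integrable u mu01) :
    ∃ useq : ℕ → ℝ → ℝ, (∀ k, Integrable (useq k) mu01) ∧
      Tendsto (fun k => L1dist (useq k) u) atTop (nhds 0) ∧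
      limsup (fun k => PottsIn γ (fseq k) (X k) (useq k)) atTop ≤ Potts γ f u := by
  by_cases hPC : IsPC u
  · obtain ⟨useq, hJ, hlim⟩ := exists_recovery hXfin hXsub hXnest hXdense hPC
    have hui : ∀ k, Integrable (useq k) mu01 := fun k => (hJ k).isPCIn.isPC.integrable
    refine ⟨useq, hui, hlim, ?_⟩
    have htend := ENNReal.tendsto_ofReal
      ((tendsto_L1dist_pair hu hf hui hfs hlim hflim).const_add (γ * jumps u))
    calc limsup (fun k => PottsIn γ (fseq k) (X k) (useq k)) atTop
        ≤ limsup (fun k => ENNReal.ofReal (γ * jumps u + L1dist (useq k) (fseq k))) atTop :=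
          limsup_le_limsup (Eventually.of_forall fun k => pottsIn_le_of_jumpsWithin hγ _ (hJ k))
      _ = Potts γ f u := by rw [htend.limsup_eq, Potts, if_pos hPC]
  · exact ⟨fun _ => u, fun _ => hu, by simp [L1dist], by simp [Potts, hPC]⟩

/-- Helly-type selection: a sequence of functions with at most `N` jumps has a subsequence that
converges a.e. in the extended reals. -/
lemma exists_subseq_tendsto_ae_ereal {v : ℕ → ℝ → ℝ} {N : ℕ}
    (hv : ∀ k, JumpsWithin N univ (v k)) :
    ∃ φ : ℕ → ℕ, StrictMono φ ∧ ∀ᵐ t ∂mu01, ∃ U : EReal,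
      Tendsto (fun k => (v (φ k) t : EReal)) atTop (nhds U) := by
  choose p hp01 _ G hG hvG using hv
  let H : Set ℝ := {t | ∀ k, t ∈ G k}
  have hH : ∀ᵐ t ∂mu01, t ∈ H := ae_all_iff.2 hG
  obtain ⟨D, hDc, hD⟩ := TopologicalSpace.exists_countable_dense H
  have : Countable D := hDc.to_subtype
  obtain ⟨⟨q, w⟩, φ, hφ, hlim⟩ := SeqCompactSpace.tendsto_subseq
    (X := (Fin N → Icc (0:ℝ) 1) × (D → EReal))
    fun k => (fun i => ⟨p k i, hp01 k i⟩, fun d => (v k d.1.1 : EReal))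
  have hq : ∀ i, Tendsto (fun k => p (φ k) i) atTop (nhds (q i : ℝ)) := fun i =>
    (continuous_subtype_val.tendsto _).comp (tendsto_pi_nhds.1 hlim.fst_nhds i)
  have hw : ∀ d : D, Tendsto (fun k => (v (φ k) d.1.1 : EReal)) atTop (nhds (w d)) := fun d =>
    tendsto_pi_nhds.1 hlim.snd_nhds d
  refine ⟨φ, hφ, ?_⟩
  filter_upwards [hH, ae_mu01_notMem_finite (finite_range fun i => (q i : ℝ))] with t htH htq
  obtain ⟨r, hr, hball⟩ := Metric.isOpen_iff.1
    (finite_range fun i => (q i : ℝ)).isClosed.isOpen_compl t htq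
  obtain ⟨d, hdD, hdball⟩ := hD.exists_mem_open
    (Metric.isOpen_ball (x := (⟨t, htH⟩ : H)) (ε := r)) ⟨_, Metric.mem_ball_self hr⟩
  have hdt : |(d : ℝ) - t| < r := hdball
  refine ⟨w ⟨d, hdD⟩, (hw ⟨d, hdD⟩).congr' ?_⟩
  have hq_avoid : ∀ i, (q i : ℝ) ∉ uIcc (d : ℝ) t := by
    intro i hi
    refine hball (a := (q i : ℝ)) ?_ ⟨i, rfl⟩
    rw [Metric.mem_ball, Real.dist_eq, abs_sub_comm]
    exact (abs_sub_right_of_mem_uIcc hi).trans_lt (by rwa [abs_sub_comm])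
  have hev : ∀ᶠ k in atTop, ∀ i, p (φ k) i ∉ uIcc (d : ℝ) t := by
    rw [eventually_all]
    exact fun i => (hq i).eventually (isClosed_Icc.isOpen_compl.mem_nhds (hq_avoid i))
  filter_upwards [hev] with k hk
  rcases lt_trichotomy (d : ℝ) t with h | h | h
  · rw [uIcc_of_le h.le] at hk
    exact congrArg _ (hvG _ _ (d.2 _) _ (htH _) h hk)
  · rw [h]
  · rw [uIcc_of_ge h.le] at hk
    exact congrArg _ (hvG _ _ (htH _) _ (d.2 _) h hk).symm

lemma ae_exists_tendsto_of_ereal {v : ℕ → ℝ → ℝ} (hv : ∀ k, AEStronglyMeasurable (v k) mu01)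
    {C : NNReal} (hC : ∀ k, eLpNorm (v k) 1 mu01 ≤ C)
    (h : ∀ᵐ t ∂mu01, ∃ U : EReal, Tendsto (fun k => (v k t : EReal)) atTop (nhds U)) :
    ∀ᵐ t ∂mu01, ∃ y : ℝ, Tendsto (fun k => v k t) atTop (nhds y) := by
  have hbdd := ae_bdd_liminf_atTop_of_eLpNorm_bdd (μ := mu01) (R := C) one_ne_zero
    (f := fun k => (hv k).mk (v k)) (fun k => (hv k).stronglyMeasurable_mk.measurable)
    (fun k => by rw [← eLpNorm_congr_ae (hv k).ae_eq_mk]; exact hC k)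
  filter_upwards [h, hbdd, ae_all_iff.2 fun k => (hv k).ae_eq_mk] with t ⟨U, hU⟩ hb hmk
  simp_rw [← hmk] at hb
  have hnot : ¬ Tendsto (fun k => ‖v k t‖) atTop atTop := by
    intro hinf
    have h2 : Tendsto (fun k => ‖v k t‖ₑ) atTop (nhds ⊤) := by
      simp_rw [← ofReal_norm]
      exact ENNReal.tendsto_ofReal_atTop.comp hinf
    rw [h2.liminf_eq] at hb
    exact lt_irrefl _ hb
  induction U with
  | bot => exact absurd (tendsto_abs_atBot_atTop.comp (EReal.tendsto_coe_nhds_bot_iff.1 hU)) hnot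
  | top => exact absurd (tendsto_abs_atTop_atTop.comp (EReal.tendsto_coe_nhds_top_iff.1 hU)) hnot
  | coe y => exact ⟨y, EReal.tendsto_coe.1 hU⟩

/-- Uniformly integrable sequences with a uniformly bounded number of jumps are relatively
compact in `L¹`. -/
lemma exists_subseq_tendsto_L1dist {v : ℕ → ℝ → ℝ} {N : ℕ} (hv : ∀ k, JumpsWithin N univ (v k))
    (hUI : UniformIntegrable v 1 mu01) :
    ∃ (u : ℝ → ℝ) (φ : ℕ → ℕ), Integrable u mu01 ∧ StrictMono φ ∧
      Tendsto (fun k => L1dist (v (φ k)) u) atTop (nhds 0) := by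
  obtain ⟨φ, hφ, hae⟩ := exists_subseq_tendsto_ae_ereal hv
  have hUI' : UniformIntegrable (fun k => v (φ k)) 1 mu01 := by
    obtain ⟨h1, h2, C, hC⟩ := hUI
    refine ⟨fun k => h1 _, fun ε hε => ?_, C, fun k => hC _⟩
    obtain ⟨δ, hδ, h⟩ := h2 hε
    exact ⟨δ, hδ, fun i s => h (φ i) s⟩
  obtain ⟨hm, hu, C, hC⟩ := id hUI'
  have hreal := ae_exists_tendsto_of_ereal hm hC hae
  let u : ℝ → ℝ := fun t =>
    if h : ∃ y : ℝ, Tendsto (fun k => v (φ k) t) atTop (nhds y) then h.choose else 0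
  have hlim : ∀ᵐ t ∂mu01, Tendsto (fun k => v (φ k) t) atTop (nhds (u t)) := by
    filter_upwards [hreal] with t ht
    simp only [u, dif_pos ht]
    exact ht.choose_spec
  have hui : Integrable u mu01 := hUI'.integrable_of_ae_tendsto hlim
  refine ⟨u, φ, hui, hφ, ?_⟩
  rw [tendsto_L1dist_iff (fun k => (hv (φ k)).isPCIn.isPC.integrable) hui]
  exact tendsto_Lp_finite_of_tendsto_ae le_rfl ENNReal.one_ne_top hm
    (memLp_one_iff_integrable.2 hui) hu hlim

lemma L1dist_le_comp_of_minimizer {γ : ℝ} (hγ : 0 < γ) {f u : ℝ → ℝ} {S : Set ℝ}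
    (hu : IsPCIn u S) (hmin : ∀ v, PottsIn γ f S u ≤ PottsIn γ f S v) (g : ℝ → ℝ) :
    L1dist u f ≤ L1dist (g ∘ u) f := by
  obtain ⟨N, hN⟩ := hu.exists_jumpsWithin
  have hgu : IsPCIn (g ∘ u) S := (hN.comp g).isPCIn
  have hj : (jumps (g ∘ u) : ℝ) ≤ jumps u := by
    exact_mod_cast (hu.isPC.jumpsWithin.comp g).jumps_le
  have h := hmin (g ∘ u)
  have h0 := L1dist_nonneg (g ∘ u) f
  rw [PottsIn, PottsIn, if_pos hu, if_pos hgu, ENNReal.ofReal_le_ofReal_iff (by positivity)] at h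
  nlinarith

lemma pottsIn_zero_le {γ : ℝ} (hγ : 0 < γ) (f : ℝ → ℝ) (S : Set ℝ) :
    PottsIn γ f S (fun _ => 0) ≤ ENNReal.ofReal (∫ t, |f t| ∂mu01) := by
  simpa [L1dist] using pottsIn_le_of_jumpsWithin hγ f (jumpsWithin_const 0 S)

lemma integral_abs_sub_truncation_le {f u : ℝ → ℝ} (hf : Integrable f mu01)
    (hu : Integrable u mu01) {C : ℝ} {g : ℝ → ℝ} (hg : ∀ y, g y = if C ≤ |y| then 0 else y)
    (hgu : Integrable (g ∘ u) mu01) (hle : L1dist u f ≤ L1dist (g ∘ u) f)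
    {A : Set ℝ} (hA : MeasurableSet A) (hAu : {t | C ≤ |u t|} ⊆ A) :
    ∫ t, |u t - g (u t)| ∂mu01 ≤ 2 * ∫ t, |A.indicator f t| ∂mu01 := by
  have i1 : Integrable (fun t => |u t - f t|) mu01 := (hu.sub hf).abs
  have i2 : Integrable (fun t => |g (u t) - f t|) mu01 := (hgu.sub hf).abs
  have i3 : Integrable (fun t => 2 * |A.indicator f t|) mu01 :=
    (hf.indicator hA).abs.const_mul 2
  have hpt : ∀ t, |u t - g (u t)| ≤ (|u t - f t| - |g (u t) - f t|) + 2 * |A.indicator f t| := by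
    intro t
    rw [hg]
    split_ifs with h
    · rw [indicator_of_mem (hAu h), sub_zero, zero_sub, abs_neg]
      have := abs_sub_abs_le_abs_sub (u t) (f t)
      linarith
    · simp
  calc ∫ t, |u t - g (u t)| ∂mu01
      ≤ ∫ t, ((|u t - f t| - |g (u t) - f t|) + 2 * |A.indicator f t|) ∂mu01 :=
        integral_mono (hu.sub hgu).abs ((i1.sub i2).add i3) hpt
    _ = (L1dist u f - L1dist (g ∘ u) f) + 2 * ∫ t, |A.indicator f t| ∂mu01 := by
        rw [integral_add (f := fun t => |u t - f t| - |g (u t) - f t|) (i1.sub i2) i3,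
          integral_sub i1 i2, integral_const_mul]
        rfl
    _ ≤ _ := by linarith

lemma uniformIntegrable_of_minimizers {γ : ℝ} (hγ : 0 < γ) {fseq useq : ℕ → ℝ → ℝ}
    {X : ℕ → Set ℝ} (hfs : UniformIntegrable fseq 1 mu01) {B : ℝ}
    (hB : ∀ k, ∫ t, |fseq k t| ∂mu01 ≤ B) (hPC : ∀ k, IsPCIn (useq k) (X k))
    (hmin : ∀ k, ∀ v, PottsIn γ (fseq k) (X k) (useq k) ≤ PottsIn γ (fseq k) (X k) v) :
    UniformIntegrable useq 1 mu01 := by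
  have hfi : ∀ k, Integrable (fseq k) mu01 := fun k => memLp_one_iff_integrable.1 (hfs.memLp k)
  have hui : ∀ k, Integrable (useq k) mu01 := fun k => (hPC k).isPC.integrable
  have hB0 : 0 ≤ B := (integral_nonneg fun _ => abs_nonneg _).trans (hB 0)
  have hbound : ∀ k, ∫ t, |useq k t| ∂mu01 ≤ 2 * B := by
    intro k
    have h1 := L1dist_le_comp_of_minimizer hγ (hPC k) (hmin k) (fun _ => 0)
    have h2 := L1dist_triangle (hui k) (hfi k) (integrable_zero ℝ ℝ mu01)
    simp only [L1dist, Function.comp_apply, Pi.zero_apply, zero_sub, sub_zero, abs_neg] at h1 h2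
    linarith [hB k]
  refine uniformIntegrable_of le_rfl ENNReal.one_ne_top (fun k => (hui k).aestronglyMeasurable)
    fun ε hε => ?_
  obtain ⟨δ, hδ, hδf⟩ := hfs.2.1 (half_pos hε)
  obtain ⟨C, hC0, hC⟩ : ∃ C : NNReal, 0 < (C : ℝ) ∧ 2 * B ≤ C * δ := by
    refine ⟨⟨2 * B / δ + 1, by positivity⟩, ?_, ?_⟩
    · change 0 < 2 * B / δ + 1
      positivity
    · change 2 * B ≤ (2 * B / δ + 1) * δ
      rw [add_mul, div_mul_cancel₀ _ hδ.ne']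
      linarith
  refine ⟨C, fun k => ?_⟩
  let g : ℝ → ℝ := fun y => if (C : ℝ) ≤ |y| then 0 else y
  set A := toMeasurable mu01 {t | (C : ℝ) ≤ |useq k t|}
  have hgu : Integrable (g ∘ useq k) mu01 := by
    obtain ⟨N, hN⟩ := (hPC k).exists_jumpsWithin
    exact (hN.comp g).isPCIn.isPC.integrable
  have hμA : mu01 A ≤ ENNReal.ofReal δ := by
    rw [measure_toMeasurable]
    have h1 := mul_meas_ge_le_integral_of_nonneg
      (Eventually.of_forall fun t => abs_nonneg (useq k t)) (hui k).abs (C : ℝ)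
    have h2 : mu01.real {t | (C : ℝ) ≤ |useq k t|} ≤ δ :=
      le_of_mul_le_mul_left (h1.trans ((hbound k).trans hC)) hC0
    rw [← ofReal_measureReal]
    exact ENNReal.ofReal_le_ofReal h2
  have hfA := hδf k A (measurableSet_toMeasurable _ _) hμA
  have htrunc := integral_abs_sub_truncation_le (hfi k) (hui k) (fun _ => rfl) hgu
    (L1dist_le_comp_of_minimizer hγ (hPC k) (hmin k) g) (measurableSet_toMeasurable mu01 _)
    (subset_toMeasurable _ _)
  have hfA' : ∫ t, |A.indicator (fseq k) t| ∂mu01 ≤ ε / 2 := by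
    rw [eLpNorm_one_eq_lintegral_enorm, ← ofReal_integral_norm_eq_lintegral_enorm
      ((hfi k).indicator (measurableSet_toMeasurable _ _)),
      ENNReal.ofReal_le_ofReal_iff (half_pos hε).le] at hfA
    exact hfA
  have heq : {t | C ≤ ‖useq k t‖₊}.indicator (useq k) = useq k - g ∘ useq k := by
    ext t
    have hiff : C ≤ ‖useq k t‖₊ ↔ (C : ℝ) ≤ |useq k t| := by
      rw [← NNReal.coe_le_coe, coe_nnnorm, Real.norm_eq_abs]
    by_cases h : (C : ℝ) ≤ |useq k t|
    · simp [indicator, g, hiff, h]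
    · simp [indicator, g, hiff, h]
  rw [heq, eLpNorm_sub_eq_ofReal_L1dist (hui k) hgu]
  refine ENNReal.ofReal_le_ofReal (htrunc.trans ?_)
  linarith

lemma exists_subseq_minimizers {γ : ℝ} (hγ : 0 < γ) {f : ℝ → ℝ} {fseq useq : ℕ → ℝ → ℝ}
    {X : ℕ → Set ℝ} (hf : Integrable f mu01) (hfs : ∀ k, Integrable (fseq k) mu01)
    (hflim : Tendsto (fun k => L1dist (fseq k) f) atTop (nhds 0))
    (hmin : ∀ k, ∀ v, PottsIn γ (fseq k) (X k) (useq k) ≤ PottsIn γ (fseq k) (X k) v) :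
    ∃ (u : ℝ → ℝ) (φ : ℕ → ℕ), Integrable u mu01 ∧ StrictMono φ ∧
      Tendsto (fun k => L1dist (useq (φ k)) u) atTop (nhds 0) := by
  have hlim0 := tendsto_L1dist_pair hf (integrable_zero ℝ ℝ mu01) hfs
    (fun _ => integrable_zero ℝ ℝ mu01) hflim (by simp [L1dist])
  obtain ⟨B, hB⟩ := hlim0.bddAbove_range
  have hB : ∀ k, ∫ t, |fseq k t| ∂mu01 ≤ B := fun k => by
    simpa [L1dist] using hB (mem_range_self k)
  have hB0 : 0 ≤ B := (integral_nonneg fun _ => abs_nonneg _).trans (hB 0)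
  have hfUI : UniformIntegrable fseq 1 mu01 := by
    refine ⟨fun k => (hfs k).aestronglyMeasurable, unifIntegrable_of_tendsto_Lp le_rfl
      ENNReal.one_ne_top (fun k => memLp_one_iff_integrable.2 (hfs k))
      (memLp_one_iff_integrable.2 hf) ((tendsto_L1dist_iff hfs hf).1 hflim), B.toNNReal,
      fun k => ?_⟩
    rw [eLpNorm_one_eq_lintegral_enorm, ← ofReal_integral_norm_eq_lintegral_enorm (hfs k)]
    exact ENNReal.ofReal_le_ofReal (hB k)
  have hall := fun k => le_of_pottsIn_le hB0 (((hmin k _).trans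
    (pottsIn_zero_le hγ (fseq k) (X k))).trans (ENNReal.ofReal_le_ofReal (hB k)))
  have hJ : ∀ k, JumpsWithin ⌊B / γ⌋₊ univ (useq k) := fun k => by
    refine (hall k).1.isPC.jumpsWithin.mono (Nat.le_floor ?_)
    rw [le_div_iff₀ hγ]
    linarith [(hall k).2, L1dist_nonneg (useq k) (fseq k)]
  exact exists_subseq_tendsto_L1dist hJ
    (uniformIntegrable_of_minimizers hγ hfUI hB (fun k => (hall k).1) hmin)

lemma limsup_comp_le_limsup (a : ℕ → ℝ≥0∞) {φ : ℕ → ℕ} (hφ : StrictMono φ) :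
    limsup (fun i => a (φ i)) atTop ≤ limsup a atTop := by
  have h : limsup (fun i => a (φ i)) atTop = limsup a (map φ atTop) := by
    simp only [limsup, map_map, Function.comp_def]
  rw [h]
  exact limsup_le_limsup_of_le hφ.tendsto_atTop

theorem statement_3
    (f : ℝ → ℝ) (hf : IntegrableOn f (Set.Icc 0 1))
    (γ : ℝ) (hγ : 0 < γ)
    (X : ℕ → Set ℝ) (hXfin : ∀ k, (X k).Finite) (hXsub : ∀ k, X k ⊆ Set.Icc 0 1)
    (hXnest : ∀ k, X k ⊆ X (k + 1)) (hXdense : Set.Icc (0:ℝ) 1 ⊆ closure (⋃ k, X k))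
    (fseq : ℕ → ℝ → ℝ)
    (hsample : (∀ k, IntegralSampled (X k) f (fseq k)) ∨
               (ContinuousOn f (Set.Icc 0 1) ∧ ∀ k, PointSampled (X k) f (fseq k))) :
    -- Γ-convergence of the fully discrete Potts functionals: liminf inequality …
    (∀ u : ℝ → ℝ, IntegrableOn u (Set.Icc 0 1) →
      ∀ useq : ℕ → ℝ → ℝ, (∀ k, IntegrableOn (useq k) (Set.Icc 0 1)) →
        Tendsto (fun k => L1dist (useq k) u) atTop (nhds 0) →
        Potts γ f u ≤ liminf (fun k => PottsIn γ (fseq k) (X k) (useq k)) atTop) ∧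
    -- … and existence of recovery sequences
    (∀ u : ℝ → ℝ, IntegrableOn u (Set.Icc 0 1) →
      ∃ useq : ℕ → ℝ → ℝ, (∀ k, IntegrableOn (useq k) (Set.Icc 0 1)) ∧
        Tendsto (fun k => L1dist (useq k) u) atTop (nhds 0) ∧
        limsup (fun k => PottsIn γ (fseq k) (X k) (useq k)) atTop ≤ Potts γ f u) ∧
    -- sequences of minimizers have accumulation points, and each accumulation point
    -- minimizes the continuous Potts functional
    (∀ useq : ℕ → ℝ → ℝ,
      (∀ k, ∀ v : ℝ → ℝ, PottsIn γ (fseq k) (X k) (useq k) ≤ PottsIn γ (fseq k) (X k) v) →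
      (∃ (u : ℝ → ℝ) (φ : ℕ → ℕ), IntegrableOn u (Set.Icc 0 1) ∧ StrictMono φ ∧
        Tendsto (fun i => L1dist (useq (φ i)) u) atTop (nhds 0)) ∧
      (∀ (u : ℝ → ℝ) (φ : ℕ → ℕ), IntegrableOn u (Set.Icc 0 1) → StrictMono φ →
        Tendsto (fun i => L1dist (useq (φ i)) u) atTop (nhds 0) →
        Potts γ f u = ⨅ (v : ℝ → ℝ) (_ : IntegrableOn v (Set.Icc 0 1)), Potts γ f v)) := by
  have hfs : ∀ k, Integrable (fseq k) mu01 := fun k =>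
    integrable_of_sampled (hXfin k) (hsample.imp (fun h => h k) fun h => h.2 k)
  have hflim : Tendsto (fun k => L1dist (fseq k) f) atTop (nhds 0) :=
    tendsto_L1dist_of_sampled hf hXfin hXsub hXnest hXdense hfs hsample
  have hrec := fun u hu => exists_recovery_potts hγ hXfin hXsub hXnest hXdense hf hfs hflim
    (u := u) hu
  refine ⟨fun u hu useq _ hlim => potts_le_liminf hγ X hf hfs hflim hu hlim, hrec,
    fun useq hmin => ⟨exists_subseq_minimizers hγ hf hfs hflim hmin, fun u φ hu hφ hlim => ?_⟩⟩
  refine le_antisymm (le_iInf₂ fun v hv => ?_) (iInf₂_le u hu)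
  obtain ⟨vseq, -, -, hvseq⟩ := hrec v hv
  calc Potts γ f u
      ≤ liminf (fun i => PottsIn γ (fseq (φ i)) (X (φ i)) (useq (φ i))) atTop :=
        potts_le_liminf hγ (fun i => X (φ i)) hf (fun i => hfs (φ i))
          (hflim.comp hφ.tendsto_atTop) hu hlim
    _ ≤ limsup (fun i => PottsIn γ (fseq (φ i)) (X (φ i)) (useq (φ i))) atTop :=
        liminf_le_limsup
    _ ≤ limsup (fun i => PottsIn γ (fseq (φ i)) (X (φ i)) (vseq (φ i))) atTop :=
        limsup_le_limsup (Eventually.of_forall fun i => hmin (φ i) (vseq (φ i)))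
    _ ≤ limsup (fun k => PottsIn γ (fseq k) (X k) (vseq k)) atTop :=
        limsup_comp_le_limsup (fun k => PottsIn γ (fseq k) (X k) (vseq k)) hφ
    _ ≤ Potts γ f v := hvseq
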